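/- arXiv:0901.0381 — 2 statements merged into one kernel-verified Lean document; each statement's English description precedes it below -/
import Mathlib

section
/- Let Z be the generator of a holomorphic semigroup (e^{tZ})_{t≥0} on a complex Banach space V. Assume there is δ > 0 such that for every λ ∈ ℂ with Re λ > −δ the operator Z − λ : dom Z → V is bijective with bounded inverse. Then the semigroup is bounded, i.e. sup_{t ≥ 0} ‖e^{tZ}‖ < ∞. -/
open Filter Topology Set MeasureTheory

/-- A strongly continuous one-parameter semigroup of bounded operators on `V`. -/
structure C0Semigroup (V : Type*) [NormedAddCommGroup V] [NormedSpace ℂ V] where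
  T : ℝ → V →L[ℂ] V
  map_zero' : T 0 = 1
  map_add' : ∀ s t : ℝ, 0 ≤ s → 0 ≤ t → T (s + t) = (T s).comp (T t)
  strong_continuous : ∀ x : V, ContinuousOn (fun t => T t x) (Set.Ici (0 : ℝ))

/-- `t⁻¹ (T(t)x − x) → y` as `t → 0+`. -/
def genLimit {V : Type*} [NormedAddCommGroup V] [NormedSpace ℂ V]
    (S : C0Semigroup V) (x y : V) : Prop :=
  Filter.Tendsto (fun t : ℝ => (t : ℂ)⁻¹ • (S.T t x - x)) (nhdsWithin 0 (Set.Ioi 0)) (nhds y)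

/-- `Z`, with domain `dom`, is the generator of the semigroup `S`. -/
structure HasGenerator {V : Type*} [NormedAddCommGroup V] [NormedSpace ℂ V]
    (S : C0Semigroup V) (dom : Set V) (Z : V → V) : Prop where
  mem_iff : ∀ x : V, x ∈ dom ↔ ∃ y : V, genLimit S x y
  tendsto : ∀ x ∈ dom, genLimit S x (Z x)

/-- The open sector of angle `θ` around the positive real axis. -/
def sector (θ : ℝ) : Set ℂ := {z : ℂ | z ≠ 0 ∧ |z.arg| < θ}

/-- A strongly continuous semigroup is holomorphic if it extends to an analytic
semigroup on some open sector. -/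
def IsHolomorphicSemigroup {V : Type*} [NormedAddCommGroup V] [NormedSpace ℂ V]
    (S : C0Semigroup V) : Prop :=
  ∃ θ : ℝ, 0 < θ ∧ θ ≤ Real.pi / 2 ∧
    ∃ F : ℂ → V →L[ℂ] V,
      DifferentiableOn ℂ F (sector θ) ∧
      (∀ t : ℝ, 0 < t → F (t : ℂ) = S.T t) ∧
      (∀ z ∈ sector θ, ∀ w ∈ sector θ, F (z + w) = (F z).comp (F w))

/-- If all characters of the bicommutant are `< 1` in modulus at `a`, the powers are bounded. -/
lemma pow_bdd_aux {A : Type*} [NormedRing A] [NormedAlgebra ℂ A] [CompleteSpace A]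
    (s : Set A) (hcomm : ∀ x ∈ s, ∀ y ∈ s, x * y = y * x) (a : A) (ha : a ∈ s) (q : NNReal)
    (hq : q < 1)
    (H : ∀ φ : A →L[ℂ] ℂ, (∀ x ∈ s.centralizer.centralizer, ∀ y ∈ s.centralizer.centralizer,
      φ (x * y) = φ x * φ y) → ‖φ a‖₊ ≤ q) :
    ∃ C : ℝ, ∀ n : ℕ, ‖a ^ n‖ ≤ C := by
  let B : Subalgebra ℂ A := Subalgebra.centralizer ℂ s.centralizer
  have hBcomm : ∀ x y : B, x * y = y * x := fun x y => Subtype.ext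
    (Set.centralizer_centralizer_comm_of_comm hcomm _ x.2 _ y.2)
  let _ : NormedCommRing B := { (inferInstance : NormedRing B) with mul_comm := hBcomm }
  let _ : NormedAlgebra ℂ B := Subalgebra.toNormedAlgebra B
  have hcl : IsClosed (B : Set A) := Set.isClosed_centralizer _
  have : CompleteSpace B := hcl.completeSpace_coe
  have haB : a ∈ B := Set.subset_centralizer_centralizer ha
  let b : B := ⟨a, haB⟩
  have hrad : spectralRadius ℂ b ≤ q := by
    refine iSup₂_le fun z hz => ?_
    obtain ⟨f, hf⟩ := WeakDual.CharacterSpace.mem_spectrum_iff_exists.1 hz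
    let g : B →L[ℂ] ℂ := WeakDual.CharacterSpace.toCLM f
    obtain ⟨φ, hφ, -⟩ := exists_extension_norm_eq (Subalgebra.toSubmodule B) g
    have hφ' : ∀ x (hx : x ∈ B), φ x = f ⟨x, hx⟩ := fun x hx => hφ ⟨x, hx⟩
    have := H φ (by
      intro x hx y hy
      have hx' : x ∈ B := hx
      have hy' : y ∈ B := hy
      rw [hφ' x hx', hφ' y hy', hφ' _ (B.mul_mem hx' hy'), ← map_mul]
      rfl)
    rw [hφ' a haB] at this
    have h2 : f ⟨a, haB⟩ = z := hf
    rw [h2] at this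
    exact_mod_cast this
  have ht := spectrum.pow_nnnorm_pow_one_div_tendsto_nhds_spectralRadius b
  have hlt : spectralRadius ℂ b < 1 := hrad.trans_lt (by exact_mod_cast hq)
  have hev := (ht.eventually (gt_mem_nhds hlt)).and (eventually_gt_atTop 0)
  obtain ⟨N, hN⟩ := eventually_atTop.1 hev
  have hle : ∀ n ≥ N, ‖a ^ n‖ ≤ 1 := by
    intro n hn
    obtain ⟨h1, h0⟩ := hN n hn
    have h0' : (0 : ℝ) < 1 / (n : ℝ) := by positivity
    have : (‖b ^ n‖₊ : ENNReal) < 1 := by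
      by_contra hc
      push Not at hc
      exact absurd h1 (not_lt.2 (ENNReal.one_le_rpow hc h0'))
    have h3 : ‖b ^ n‖₊ < 1 := by exact_mod_cast this
    have h4 : ‖b ^ n‖ < 1 := by exact_mod_cast h3
    exact le_of_lt h4
  refine ⟨1 + ∑ k ∈ Finset.range N, ‖a ^ k‖, fun n => ?_⟩
  have hnn : 0 ≤ ∑ k ∈ Finset.range N, ‖a ^ k‖ := Finset.sum_nonneg fun _ _ => norm_nonneg _
  rcases le_or_gt N n with h | h
  · linarith [hle n h]
  · have := Finset.single_le_sum (f := fun k => ‖a ^ k‖) (fun _ _ => norm_nonneg _)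
      (Finset.mem_range.2 h)
    linarith

/-- Multiplicative differentiable functions on the positive half-line. -/
lemma exp_aux (f f' : ℝ → ℂ) (hd : ∀ t, 0 < t → HasDerivAt f (f' t) t)
    (hm : ∀ s t, 0 < s → 0 < t → f (s + t) = f s * f t) (h1 : f 1 ≠ 0) :
    f 1 = Complex.exp (f' 1 / f 1) := by
  have key : ∀ t, 0 < t → f' t = (f' 1 / f 1) * f t := by
    intro t ht
    have e1 : HasDerivAt (fun s => f s * f 1) (f' t * f 1) t := (hd t ht).mul_const _
    have e2 : HasDerivAt (fun s => f (s + 1)) (f' (t + 1)) t :=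
      (hd (t + 1) (by linarith)).comp_add_const t 1
    have e3 : HasDerivAt (fun s => f t * f s) (f t * f' 1) 1 := (hd 1 one_pos).const_mul _
    have e4 : HasDerivAt (fun s => f (t + s)) (f' (t + 1)) 1 :=
      (hd (t + 1) (by linarith)).comp_const_add t 1
    have h12 : f' (t + 1) = f' t * f 1 := e2.unique (e1.congr_of_eventuallyEq (by
      filter_upwards [lt_mem_nhds ht] with s hs using hm s 1 hs one_pos))
    have h34 : f' (t + 1) = f t * f' 1 := e4.unique (e3.congr_of_eventuallyEq (by
      filter_upwards [lt_mem_nhds one_pos] with s hs using hm t s ht hs))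
    field_simp
    rw [← h12, h34, mul_comm]
  set μ := f' 1 / f 1 with hμ
  have hE : ∀ t : ℝ, HasDerivAt (fun s : ℝ => Complex.exp (-μ * (s : ℂ)))
      (Complex.exp (-μ * (t : ℂ)) * (-μ * 1)) t := fun t =>
    ((Complex.ofRealCLM.hasDerivAt (x := t)).const_mul (-μ)).cexp
  have hg : ∀ t, 0 < t → HasDerivAt (fun s : ℝ => f s * Complex.exp (-μ * (s : ℂ))) 0 t := by
    intro t ht
    have := (hd t ht).mul (hE t)
    have e0 : f' t * Complex.exp (-μ * (t : ℂ)) + f t * (Complex.exp (-μ * (t : ℂ)) * (-μ * 1)) = 0 := by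
      rw [key t ht]; ring
    rw [e0] at this
    exact this
  have hc := constant_of_has_deriv_right_zero (a := 1) (b := 2)
    (f := fun s : ℝ => f s * Complex.exp (-μ * (s : ℂ)))
    (fun t ht => (hg t (by linarith [ht.1])).continuousAt.continuousWithinAt)
    (fun t ht => (hg t (by linarith [ht.1])).hasDerivWithinAt) 2 (by norm_num)
  have h2 : f 2 = f 1 * f 1 := by rw [← hm 1 1 one_pos one_pos]; norm_num
  rw [h2] at hc
  have e5 : Complex.exp (-μ * ((2 : ℝ) : ℂ)) =
      Complex.exp (-μ * ((1 : ℝ) : ℂ)) * Complex.exp (-μ) := by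
    rw [← Complex.exp_add]; congr 1; push_cast; ring
  rw [e5] at hc
  have e6 : f 1 * Complex.exp (-μ * ((1 : ℝ) : ℂ)) * (f 1 * Complex.exp (-μ)) =
    f 1 * Complex.exp (-μ * ((1 : ℝ) : ℂ)) * 1 := by
    rw [mul_one]; refine Eq.trans ?_ hc; ring
  have e7 := mul_left_cancel₀ (mul_ne_zero h1 (Complex.exp_ne_zero _)) e6
  rw [Complex.exp_neg] at e7
  field_simp at e7
  exact e7

lemma sector_nhds {θ : ℝ} (hθ : 0 < θ) {t : ℝ} (ht : 0 < t) : sector θ ∈ 𝓝 (t : ℂ) := by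
  have h1 : ContinuousAt (fun z : ℂ => |z.arg|) (t : ℂ) :=
    (Complex.continuousAt_arg (by simp [Complex.slitPlane, ht])).abs
  have h2 : |((t : ℂ)).arg| < θ := by
    rw [Complex.arg_ofReal_of_nonneg ht.le]; simpa using hθ
  have h3 : (t : ℂ) ≠ 0 := by exact_mod_cast ht.ne'
  filter_upwards [h1.eventually (gt_mem_nhds h2), isOpen_ne.mem_nhds h3] with z hz hz'
  exact ⟨hz', hz⟩

section
variable {V : Type*} [NormedAddCommGroup V] [NormedSpace ℂ V]

lemma hol_deriv {S : C0Semigroup V} (hhol : IsHolomorphicSemigroup S) :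
    ∃ D : ℝ → V →L[ℂ] V, ∀ t, 0 < t → HasDerivAt S.T (D t) t := by
  obtain ⟨θ, h0, -, F, hF, hFT, -⟩ := hhol
  refine ⟨fun t => deriv F t, fun t ht => ?_⟩
  have h1 : HasDerivAt (fun s : ℝ => F (s : ℂ)) (deriv F t) t := by
    have := ((hF.differentiableAt (sector_nhds h0 ht)).hasDerivAt).scomp t
      (Complex.ofRealCLM.hasDerivAt (x := t))
    simpa [Function.comp_def] using this
  refine h1.congr_of_eventuallyEq ?_
  filter_upwards [lt_mem_nhds ht] with s hs using (hFT s hs).symm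

lemma gen_unique {S : C0Semigroup V} {x y z : V} (h1 : genLimit S x y) (h2 : genLimit S x z) :
    y = z := tendsto_nhds_unique h1 h2

lemma gen_comm {S : C0Semigroup V} {x y : V} (h1 : genLimit S x y) (B : V →L[ℂ] V)
    (hB : ∀ t, 0 < t → S.T t * B = B * S.T t) : genLimit S (B x) (B y) := by
  have h2 := (B.continuous.tendsto y).comp h1
  refine h2.congr' ?_
  filter_upwards [self_mem_nhdsWithin] with t ht
  have := congrArg (fun L : V →L[ℂ] V => L x) (hB t ht)
  simp only [ContinuousLinearMap.mul_apply] at this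
  simp [this]

lemma gen_deriv {S : C0Semigroup V} {D : V →L[ℂ] V} {t : ℝ} (ht : 0 < t)
    (hD : HasDerivAt S.T D t) (x : V) : genLimit S (S.T t x) (D x) := by
  have h1 := hD.tendsto_slope_zero_right
  have h2 := ((ContinuousLinearMap.apply ℂ V x).continuous.tendsto D).comp h1
  refine h2.congr' ?_
  filter_upwards [self_mem_nhdsWithin] with h hh
  have hh' : (0 : ℝ) < h := hh
  have e : S.T (t + h) x = S.T h (S.T t x) := by
    rw [add_comm, S.map_add' h t hh'.le ht.le]; rfl
  simp only [Function.comp, ContinuousLinearMap.apply_apply, ContinuousLinearMap.smul_apply,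
    ContinuousLinearMap.sub_apply, e]
  rw [← Complex.ofReal_inv, Complex.coe_smul]

lemma T_comm (S : C0Semigroup V) {s t : ℝ} (hs : 0 < s) (ht : 0 < t) :
    S.T s * S.T t = S.T t * S.T s := by
  have h1 := S.map_add' s t hs.le ht.le
  have h2 := S.map_add' t s ht.le hs.le
  rw [add_comm] at h2
  exact h1.symm.trans h2

lemma T_nat (S : C0Semigroup V) (n : ℕ) : S.T n = S.T 1 ^ n := by
  induction n with
  | zero => simp [S.map_zero']
  | succ k ih =>
    rw [Nat.cast_succ, S.map_add' k 1 (by positivity) zero_le_one, ih, pow_succ]; rfl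

lemma T_local_bdd [CompleteSpace V] (S : C0Semigroup V) :
    ∃ K : ℝ, ∀ t ∈ Icc (0 : ℝ) 1, ‖S.T t‖ ≤ K := by
  obtain ⟨K, hK⟩ := banach_steinhaus (g := fun t : Icc (0 : ℝ) 1 => S.T t) (by
    intro x
    have := isCompact_Icc.exists_bound_of_continuousOn
      ((S.strong_continuous x).mono (Icc_subset_Ici_self : Icc (0 : ℝ) 1 ⊆ Ici 0))
    obtain ⟨C, hC⟩ := this
    exact ⟨C, fun i => hC i i.2⟩)
  exact ⟨K, fun t ht => hK ⟨t, ht⟩⟩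

end

/-- If the generator `Z` of a holomorphic semigroup has bounded
resolvents on a half plane `Re λ > −δ` for some `δ > 0`, then the semigroup is bounded. -/
theorem stmt1 {V : Type*} [NormedAddCommGroup V] [NormedSpace ℂ V] [CompleteSpace V]
    (S : C0Semigroup V) (dom : Set V) (Z : V → V)
    (hgen : HasGenerator S dom Z)
    (hhol : IsHolomorphicSemigroup S)
    (hres : ∃ δ : ℝ, 0 < δ ∧ ∀ lam : ℂ, -δ < lam.re →
      ∃ R : V →L[ℂ] V, (∀ x ∈ dom, R (Z x - lam • x) = x) ∧
        ∀ y : V, R y ∈ dom ∧ Z (R y) - lam • R y = y) :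
    ∃ M : ℝ, ∀ t : ℝ, 0 ≤ t → ‖S.T t‖ ≤ M := by
  obtain ⟨D, hD⟩ := hol_deriv hhol
  obtain ⟨δ, hδ, hR⟩ := hres
  obtain ⟨K, hK⟩ := T_local_bdd S
  let s : Set (V →L[ℂ] V) := S.T '' Ioi 0
  have hpow : ∃ C : ℝ, ∀ n : ℕ, ‖S.T 1 ^ n‖ ≤ C := by
    have hq0 : (0 : ℝ) ≤ Real.exp (-δ) := (Real.exp_pos _).le
    refine pow_bdd_aux s ?_ (S.T 1) ⟨1, mem_Ioi.2 one_pos, rfl⟩ (Real.toNNReal (Real.exp (-δ))) ?_ ?_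
    · rintro _ ⟨a, ha, rfl⟩ _ ⟨b, hb, rfl⟩
      exact T_comm S ha hb
    · rw [← NNReal.coe_lt_coe]
      rw [Real.coe_toNNReal _ hq0]
      simpa using hδ
    intro φ hφ
    rw [← NNReal.coe_le_coe]
    rw [coe_nnnorm, Real.coe_toNNReal _ hq0]
    have hTs : ∀ t, 0 < t → S.T t ∈ s.centralizer.centralizer := fun t ht =>
      Set.subset_centralizer_centralizer ⟨t, ht, rfl⟩
    by_cases h1 : φ (S.T 1) = 0
    · rw [h1, norm_zero]; exact hq0
    have hexp := exp_aux (fun t => φ (S.T t)) (fun t => φ (D t))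
      (fun t ht => by
        have := ((φ.restrictScalars ℝ).hasFDerivAt (x := S.T t)).comp_hasDerivAt t (hD t ht)
        exact this)
      (fun a b ha hb => by
        rw [← hφ _ (hTs a ha) _ (hTs b hb), S.map_add' a b ha.le hb.le]; rfl) h1
    set μ := φ (D 1) / φ (S.T 1) with hμ
    rw [hexp, Complex.norm_exp, Real.exp_le_exp]
    by_contra hc
    push Not at hc
    obtain ⟨R, hR1, hR2⟩ := hR μ hc
    have hBs : ∀ B ∈ s.centralizer, ∀ t, 0 < t → S.T t * B = B * S.T t := fun B hB t ht =>
      hB _ ⟨t, ht, rfl⟩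
    have hD1 : D 1 ∈ s.centralizer.centralizer := by
      intro B hB
      ext x
      have g1 := gen_comm (gen_deriv one_pos (hD 1 one_pos) x) B (hBs B hB)
      have g2 := gen_deriv one_pos (hD 1 one_pos) (B x)
      have e : S.T 1 (B x) = B (S.T 1 x) :=
        congrArg (fun L : V →L[ℂ] V => L x) (hBs B hB 1 one_pos)
      rw [e] at g2
      exact gen_unique g1 g2
    have hRm : R ∈ s.centralizer.centralizer := by
      intro B hB
      ext y
      obtain ⟨hd, he⟩ := hR2 y
      have g1 := gen_comm (hgen.tendsto _ hd) B (hBs B hB)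
      have hdB : B (R y) ∈ dom := (hgen.mem_iff _).2 ⟨_, g1⟩
      have hZ : Z (B (R y)) = B (Z (R y)) := gen_unique (hgen.tendsto _ hdB) g1
      have h3 := hR1 _ hdB
      rw [hZ, ← map_smul, ← map_sub, he] at h3
      exact h3.symm
    have hop : R * (D 1 - μ • S.T 1) = S.T 1 := by
      ext x
      have g := gen_deriv one_pos (hD 1 one_pos) x
      have hd : S.T 1 x ∈ dom := (hgen.mem_iff _).2 ⟨_, g⟩
      have hZ : Z (S.T 1 x) = D 1 x := gen_unique (hgen.tendsto _ hd) g
      have h3 := hR1 _ hd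
      rw [hZ] at h3
      exact h3
    have hmem : D 1 - μ • S.T 1 ∈ s.centralizer.centralizer :=
      (Subalgebra.centralizer ℂ s.centralizer).sub_mem hD1
        ((Subalgebra.centralizer ℂ s.centralizer).smul_mem (hTs 1 one_pos) μ)
    have h4 := hφ _ hRm _ hmem
    rw [hop, map_sub, map_smul, smul_eq_mul, hμ, div_mul_cancel₀ _ h1, sub_self, mul_zero] at h4
    exact h1 h4
  obtain ⟨C, hC⟩ := hpow
  refine ⟨C * K, fun t ht => ?_⟩
  have hfl := Nat.floor_le ht
  have hlt := Nat.lt_floor_add_one t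
  have e : S.T t = (S.T 1 ^ ⌊t⌋₊).comp (S.T (t - ⌊t⌋₊)) := by
    rw [← T_nat, ← S.map_add' _ _ (by positivity) (by linarith)]
    congr 1; ring
  rw [e]
  refine (ContinuousLinearMap.opNorm_comp_le _ _).trans ?_
  exact mul_le_mul (hC _) (hK _ ⟨by linarith, by linarith⟩) (norm_nonneg _)
    ((norm_nonneg _).trans (hC 0))
end

section
/- Let Z be the generator of a holomorphic semigroup (e^{tZ})_{t≥0} on a complex Banach space V. Let ε > 0 and let (B(r))_{r∈[−ε,ε]} be a family of closed operators on V with B(0) = 0 such that: (i) for every t > 0 and r ∈ [−ε,ε] the operator B(r) e^{tZ} is everywhere defined and bounded and depends continuously on r in operator norm; (ii) for every t > 0 the derivative (d/dr)(B(r) e^{tZ})|_{r=0} exists in operator norm; (iii) there is C > 0 such that ‖r⁻¹ B(r) e^{tZ}‖ ≤ C t^{−1/2} for all r ∈ [−ε,ε] ∖ {0} and 0 < t < 1; (iv) the set of f ∈ dom Z such that B(r) e^{tZ} f ∈ dom Z for all t ≥ 0 and all r ∈ [−ε,ε] is dense in V. For each r let e^{t(Z+B(r))} denote the holomorphic semigroup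 generated by Z + B(r) with domain dom Z. Then for every t ≥ 0 the map r ↦ e^{t(Z+B(r))} is differentiable in operator norm at r = 0, and (d/dr) e^{t(Z+B(r))}|_{r=0} = ∫₀ᵗ e^{sZ} · (d/dr)(B(r) e^{(t−s)Z})|_{r=0} ds, the integral converging in operator norm. -/
open Filter Topology Set MeasureTheory

section helpers

lemma aux_ofReal {E : Type*} [NormedAddCommGroup E] [NormedSpace ℂ E] {f : ℂ → E} {f' : E}
    {x : ℝ} (h : HasDerivAt f f' (x : ℂ)) : HasDerivAt (fun y : ℝ => f (y : ℂ)) f' x := by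
  have h1 : HasDerivAt (fun y : ℝ => (y : ℂ)) 1 x := by
    simpa using (hasDerivAt_id x).ofReal_comp
  have h2 := HasDerivAt.scomp (𝕜 := ℝ) x h h1
  rw [one_smul] at h2
  exact h2

variable {V : Type*} [NormedAddCommGroup V] [NormedSpace ℂ V]

lemma aux_locbdd [CompleteSpace V] (S : C0Semigroup V) (t : ℝ) :
    ∃ M : ℝ, 0 < M ∧ ∀ s ∈ Icc (0 : ℝ) t, ‖S.T s‖ ≤ M := by
  have h := banach_steinhaus (g := fun s : Icc (0 : ℝ) t => S.T s) (by
    intro x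
    have hc : ContinuousOn (fun s => S.T s x) (Icc (0 : ℝ) t) :=
      (S.strong_continuous x).mono Icc_subset_Ici_self
    obtain ⟨C, hC⟩ := isCompact_Icc.exists_bound_of_continuousOn hc
    exact ⟨C, fun s => hC s s.2⟩)
  obtain ⟨M, hM⟩ := h
  exact ⟨max M 1, by positivity, fun s hs => (hM ⟨s, hs⟩).trans (le_max_left _ _)⟩

lemma aux_joint [CompleteSpace V] (S : C0Semigroup V) (t : ℝ) (g : ℝ → V)
    (hg : ContinuousOn g (Icc 0 t)) :
    ContinuousOn (fun s => S.T s (g s)) (Icc 0 t) := by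
  obtain ⟨M, hM0, hM⟩ := aux_locbdd S t
  intro s0 hs0
  have h1 : Tendsto (fun s => M * ‖g s - g s0‖ + ‖S.T s (g s0) - S.T s0 (g s0)‖)
      (𝓝[Icc 0 t] s0) (𝓝 0) := by
    have ha : Tendsto (fun s => g s - g s0) (𝓝[Icc 0 t] s0) (𝓝 0) := by
      simpa using (hg s0 hs0).tendsto.sub_const (g s0)
    have hb : Tendsto (fun s => S.T s (g s0) - S.T s0 (g s0)) (𝓝[Icc 0 t] s0) (𝓝 0) := by
      have := (((S.strong_continuous (g s0)).mono Icc_subset_Ici_self) s0 hs0).tendsto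
      simpa using this.sub_const (S.T s0 (g s0))
    simpa using (ha.norm.const_mul M).add hb.norm
  rw [ContinuousWithinAt, tendsto_iff_norm_sub_tendsto_zero]
  refine squeeze_zero' (Eventually.of_forall fun s => norm_nonneg _) ?_ h1
  filter_upwards [self_mem_nhdsWithin] with s hs
  calc ‖S.T s (g s) - S.T s0 (g s0)‖
      = ‖S.T s (g s - g s0) + (S.T s (g s0) - S.T s0 (g s0))‖ := by
        rw [map_sub]; congr 1; abel
    _ ≤ ‖S.T s (g s - g s0)‖ + ‖S.T s (g s0) - S.T s0 (g s0)‖ := norm_add_le _ _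
    _ ≤ _ := by
        gcongr
        exact (S.T s).le_of_opNorm_le (hM s hs) _

lemma aux_hol (S : C0Semigroup V) (h : IsHolomorphicSemigroup S) :
    ∃ F F' : ℂ → V →L[ℂ] V, (∀ u : ℝ, 0 < u → HasDerivAt F (F' u) (u : ℂ)) ∧
      ∀ u : ℝ, 0 < u → F u = S.T u := by
  obtain ⟨θ, h0, h1, F, hd, hF, -⟩ := h
  refine ⟨F, deriv F, fun u hu => ?_, hF⟩
  apply DifferentiableAt.hasDerivAt
  apply hd.differentiableAt
  have hs : (u : ℂ) ∈ Complex.slitPlane := by simp [hu]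
  have hc : ContinuousAt (fun z : ℂ => |z.arg|) (u : ℂ) := (Complex.continuousAt_arg hs).abs
  have h2 : ∀ᶠ z : ℂ in 𝓝 (u : ℂ), |z.arg| < θ := by
    apply hc.eventually_lt continuousAt_const
    simpa [Complex.arg_ofReal_of_nonneg hu.le] using h0
  have h3 : ∀ᶠ z : ℂ in 𝓝 (u : ℂ), z ≠ 0 :=
    isOpen_ne.mem_nhds (by simpa using hu.ne')
  filter_upwards [h2, h3] with z a b
  exact ⟨b, a⟩

lemma aux_normcont (S : C0Semigroup V) (h : IsHolomorphicSemigroup S) :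
    ContinuousOn S.T (Ioi 0) := by
  obtain ⟨F, F', hF', hF⟩ := aux_hol S h
  have : ContinuousOn (fun u : ℝ => F u) (Ioi 0) := fun u hu =>
    ((aux_ofReal (hF' u hu)).continuousAt).continuousWithinAt
  exact this.congr fun u hu => (hF u hu).symm

/-- the derivative of the extension acts as the semigroup composed with the generator -/
lemma aux_deriv (S : C0Semigroup V) (F F' : ℂ → V →L[ℂ] V)
    (hF' : ∀ u : ℝ, 0 < u → HasDerivAt F (F' u) (u : ℂ))
    (hF : ∀ u : ℝ, 0 < u → F u = S.T u) (u : ℝ) (hu : 0 < u) (x : V) :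
    Tendsto (fun h : ℝ => (h : ℂ)⁻¹ • (S.T (u + h) x - S.T u x)) (𝓝[>] 0) (𝓝 (F' u x)) := by
  have h1 : HasDerivAt (fun z => F z x) (F' u x) (u : ℂ) := by
    simpa using (hF' u hu).clm_apply (hasDerivAt_const (u : ℂ) x)
  have h2 := (aux_ofReal h1).tendsto_slope_zero_right
  refine h2.congr' ?_
  filter_upwards [self_mem_nhdsWithin] with h hh
  have hh : 0 < h := hh
  rw [hF u hu, hF (u + h) (by positivity), ← Complex.ofReal_inv, Complex.coe_smul]

lemma aux_gen (S : C0Semigroup V) (F F' : ℂ → V →L[ℂ] V)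
    (hF' : ∀ u : ℝ, 0 < u → HasDerivAt F (F' u) (u : ℂ))
    (hF : ∀ u : ℝ, 0 < u → F u = S.T u) (u : ℝ) (hu : 0 < u) (x : V) :
    genLimit S (S.T u x) (F' u x) := by
  refine (aux_deriv S F F' hF' hF u hu x).congr' ?_
  filter_upwards [self_mem_nhdsWithin] with h hh
  have hh : 0 < h := hh
  rw [add_comm u h, S.map_add' h u hh.le hu.le]; rfl

lemma aux_deriv_eq (S : C0Semigroup V) (F F' : ℂ → V →L[ℂ] V)
    (hF' : ∀ u : ℝ, 0 < u → HasDerivAt F (F' u) (u : ℂ))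
    (hF : ∀ u : ℝ, 0 < u → F u = S.T u) (u : ℝ) (hu : 0 < u) (x y : V)
    (hxy : genLimit S x y) : F' u x = S.T u y := by
  refine tendsto_nhds_unique (aux_deriv S F F' hF' hF u hu x) ?_
  refine (((S.T u).continuous.tendsto y).comp hxy).congr' ?_
  filter_upwards [self_mem_nhdsWithin] with h hh
  have hh : 0 < h := hh
  rw [S.map_add' u h hu.le hh.le]
  simp

lemma aux_w_int (t : ℝ) :
    IntervalIntegrable (fun s : ℝ => (t - s) ^ (-(1/2) : ℝ)) volume 0 t := by
  have h : IntervalIntegrable (fun s : ℝ => s ^ (-(1/2) : ℝ)) volume 0 t :=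
    intervalIntegral.intervalIntegrable_rpow' (by norm_num)
  simpa using (h.comp_sub_left t).symm

lemma aux_w_val (t : ℝ) :
    ∫ s in (0 : ℝ)..t, (t - s) ^ (-(1/2) : ℝ) = 2 * √t := by
  rw [intervalIntegral.integral_comp_sub_left (fun s : ℝ => s ^ (-(1/2) : ℝ)) t,
    sub_self, sub_zero, integral_rpow (Or.inl (by norm_num))]
  rw [Real.sqrt_eq_rpow, Real.zero_rpow (by norm_num)]
  norm_num
  ring

/-- integrability from continuity on the open interval and the bound -/
lemma aux_integrable {E : Type*} [NormedAddCommGroup E] (t : ℝ) (ht : 0 ≤ t) (f : ℝ → E)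
    (hf : ContinuousOn f (Ioo 0 t)) (K : ℝ)
    (hb : ∀ s ∈ Ioo 0 t, ‖f s‖ ≤ K * (t - s) ^ (-(1/2) : ℝ)) :
    IntervalIntegrable f volume 0 t := by
  rw [intervalIntegrable_iff_integrableOn_Ioo_of_le ht]
  have h := (intervalIntegrable_iff_integrableOn_Ioo_of_le ht).1 ((aux_w_int t).const_mul K)
  refine Integrable.mono' h (hf.aestronglyMeasurable measurableSet_Ioo) ?_
  exact (ae_restrict_iff' measurableSet_Ioo).2 (Eventually.of_forall hb)

lemma aux_cont_Ioo {E : Type*} [TopologicalSpace E] (t : ℝ) (g : ℝ → E)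
    (hg : ContinuousOn g (Ioi 0)) : ContinuousOn (fun s => g (t - s)) (Ioo 0 t) :=
  hg.comp (by fun_prop) fun s hs => by
    have := hs.2
    simp only [mem_Ioi]; linarith

lemma aux_duhamel_int [CompleteSpace V] (R : C0Semigroup V)
    (hR : IsHolomorphicSemigroup R) (g : ℝ → V →L[ℂ] V)
    (hgc : ContinuousOn g (Ioi 0)) (K t m : ℝ) (ht : 0 ≤ t) (hm : ∀ s ∈ Icc 0 t, ‖R.T s‖ ≤ m)
    (hb : ∀ u ∈ Ioc 0 t, ‖g u‖ ≤ K * u ^ (-(1/2) : ℝ)) :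
    IntervalIntegrable (fun s => (R.T s).comp (g (t - s))) volume 0 t := by
  refine aux_integrable t ht _ ?_ (m * K) ?_
  · exact ((aux_normcont R hR).mono (fun s hs => hs.1)).clm_comp (aux_cont_Ioo t g hgc)
  · intro s hs
    have h1 := hm s ⟨hs.1.le, hs.2.le⟩
    have h2 := hb (t - s) ⟨by linarith [hs.2], by linarith [hs.1]⟩
    calc _ ≤ ‖R.T s‖ * ‖g (t - s)‖ := ContinuousLinearMap.opNorm_comp_le _ _
      _ ≤ m * (K * (t - s) ^ (-(1/2) : ℝ)) := by
        apply mul_le_mul h1 h2 (norm_nonneg _) ((norm_nonneg _).trans h1)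
      _ = _ := by ring

lemma aux_duhamel [CompleteSpace V] (R S : C0Semigroup V)
    (hR : IsHolomorphicSemigroup R) (hS : IsHolomorphicSemigroup S) (g : ℝ → V →L[ℂ] V)
    (hg : ∀ u > 0, ∀ x y, genLimit S (S.T u x) y → genLimit R (S.T u x) (y + g u x))
    (hgc : ContinuousOn g (Ioi 0)) (K t : ℝ) (ht : 0 ≤ t)
    (hb : ∀ u ∈ Ioc 0 t, ‖g u‖ ≤ K * u ^ (-(1/2) : ℝ)) :
    R.T t - S.T t = ∫ s in (0 : ℝ)..t, (R.T s).comp (g (t - s)) := by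
  obtain ⟨m, hm0, hm⟩ := aux_locbdd R t
  have hint := aux_duhamel_int R hR g hgc K t m ht hm hb
  obtain ⟨F, F', hF', hF⟩ := aux_hol S hS
  obtain ⟨H, H', hH', hH⟩ := aux_hol R hR
  ext f
  rw [ContinuousLinearMap.intervalIntegral_apply hint f]
  have hcont : ContinuousOn (fun s => R.T s (S.T (t - s) f)) (Icc 0 t) := by
    apply aux_joint
    refine (S.strong_continuous f).comp (by fun_prop) ?_
    intro s hs
    simp only [mem_Ici]; linarith [hs.2]
  have hint2 : IntervalIntegrable (fun s => ((R.T s).comp (g (t - s))) f) volume 0 t :=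
    ⟨hint.1.apply_continuousLinearMap f, hint.2.apply_continuousLinearMap f⟩
  rw [intervalIntegral.integral_eq_sub_of_hasDerivAt_of_le ht hcont ?_ hint2]
  · simp [R.map_zero', S.map_zero']
  intro s hs
  have hts : 0 < t - s := by linarith [hs.2]
  have h1 : HasDerivAt (fun z : ℂ => F ((t : ℂ) - z) f) (-(F' (t - s : ℝ) f)) (s : ℂ) := by
    have ha := hF' (t - s) hts
    push_cast at ha
    have hb := ha.comp_const_sub (t : ℂ) (s : ℂ)
    simpa using hb.clm_apply (hasDerivAt_const (s : ℂ) f)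
  have h2 := aux_ofReal ((hH' s hs.1).clm_apply h1)
  have hgl := aux_gen S F F' hF' hF (t - s) hts f
  have h3 := aux_deriv_eq R H H' hH' hH s hs.1 _ _ (hg (t - s) hts f _ hgl)
  have e1 : F ((t : ℂ) - (s : ℂ)) = S.T (t - s) := by
    rw [← hF (t - s) hts]; push_cast; rfl
  rw [e1, h3, hH s hs.1] at h2
  have h4 : HasDerivAt (fun y : ℝ => H (y : ℂ) (F ((t : ℂ) - (y : ℂ)) f))
      (((R.T s).comp (g (t - s))) f) s := by
    convert h2 using 1
    simp
  refine h4.congr_of_eventuallyEq ?_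
  filter_upwards [Ioo_mem_nhds hs.1 hs.2] with y hy
  have hty : 0 < t - y := by linarith [hy.2]
  rw [hH y hy.1, ← hF (t - y) hty]; push_cast; rfl

lemma aux_diff_bound [CompleteSpace V] (R S : C0Semigroup V)
    (hR : IsHolomorphicSemigroup R) (hS : IsHolomorphicSemigroup S) (g : ℝ → V →L[ℂ] V)
    (hg : ∀ u > 0, ∀ x y, genLimit S (S.T u x) y → genLimit R (S.T u x) (y + g u x))
    (hgc : ContinuousOn g (Ioi 0)) (K t m : ℝ) (hK : 0 ≤ K)
    (hb : ∀ u ∈ Ioc 0 t, ‖g u‖ ≤ K * u ^ (-(1/2) : ℝ))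
    (hm : ∀ s ∈ Icc 0 t, ‖R.T s‖ ≤ m) (t' : ℝ) (ht' : t' ∈ Icc 0 t) :
    ‖R.T t' - S.T t'‖ ≤ m * K * (2 * √t) := by
  have hb' : ∀ u ∈ Ioc 0 t', ‖g u‖ ≤ K * u ^ (-(1/2) : ℝ) :=
    fun u hu => hb u ⟨hu.1, hu.2.trans ht'.2⟩
  have hm0 : 0 ≤ m := (norm_nonneg _).trans (hm t' ht')
  rw [aux_duhamel R S hR hS g hg hgc K t' ht'.1 hb']
  have h := intervalIntegral.norm_integral_le_of_norm_le (f := fun s => (R.T s).comp (g (t' - s)))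
    (μ := volume) ht'.1 (g := fun s => m * K * (t' - s) ^ (-(1/2) : ℝ)) ?_
    ((aux_w_int t').const_mul _)
  · refine h.trans ?_
    rw [intervalIntegral.integral_const_mul, aux_w_val t']
    have := Real.sqrt_le_sqrt ht'.2
    gcongr
  · have : ∀ᵐ s : ℝ, s ≠ t' := by simp [ae_iff]
    filter_upwards [this] with s hst hs
    have hs2 : s < t' := lt_of_le_of_ne hs.2 hst
    have h1 := hm s ⟨hs.1.le, hs.2.trans ht'.2⟩
    have h2 := hb' (t' - s) ⟨by linarith, by linarith [hs.1]⟩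
    calc _ ≤ ‖R.T s‖ * ‖g (t' - s)‖ := ContinuousLinearMap.opNorm_comp_le _ _
      _ ≤ m * (K * (t' - s) ^ (-(1/2) : ℝ)) := by
        apply mul_le_mul h1 h2 (norm_nonneg _) hm0
      _ = _ := by ring

lemma aux_unif [CompleteSpace V] (R S : C0Semigroup V)
    (hR : IsHolomorphicSemigroup R) (hS : IsHolomorphicSemigroup S) (g : ℝ → V →L[ℂ] V)
    (hg : ∀ u > 0, ∀ x y, genLimit S (S.T u x) y → genLimit R (S.T u x) (y + g u x))
    (hgc : ContinuousOn g (Ioi 0)) (K t M : ℝ) (ht : 0 ≤ t) (hK : 0 ≤ K)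
    (hb : ∀ u ∈ Ioc 0 t, ‖g u‖ ≤ K * u ^ (-(1/2) : ℝ))
    (hM : ∀ s ∈ Icc 0 t, ‖S.T s‖ ≤ M) (hsmall : K * (2 * √t) ≤ 1/2) :
    ∀ s ∈ Icc 0 t, ‖R.T s‖ ≤ 2 * M := by
  obtain ⟨m0, -, hm0⟩ := aux_locbdd R t
  set A : Set ℝ := (fun s => ‖R.T s‖) '' Icc 0 t
  have hbd : BddAbove A := ⟨m0, by rintro _ ⟨s, hs, rfl⟩; exact hm0 s hs⟩
  have hle : ∀ s ∈ Icc 0 t, ‖R.T s‖ ≤ sSup A := fun s hs => le_csSup hbd ⟨s, hs, rfl⟩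
  have hpos : 0 ≤ sSup A := (norm_nonneg _).trans (hle 0 ⟨le_rfl, ht⟩)
  have hfin : sSup A ≤ M + sSup A * K * (2 * √t) := by
    refine csSup_le (Set.Nonempty.image _ ⟨0, ⟨le_rfl, ht⟩⟩) ?_
    rintro _ ⟨s, hs, rfl⟩
    have h1 := aux_diff_bound R S hR hS g hg hgc K t _ hK hb hle s hs
    have h2 := norm_add_le (S.T s) (R.T s - S.T s)
    rw [add_sub_cancel] at h2
    have := hM s hs
    show ‖R.T s‖ ≤ _
    linarith
  intro s hs
  have := hle s hs
  nlinarith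

lemma aux_cont_of_comp (S : C0Semigroup V) (hS : IsHolomorphicSemigroup S) (g : ℝ → V →L[ℂ] V)
    (hg : ∀ δ > 0, ∀ v ≥ 0, g (δ + v) = (g δ).comp (S.T v)) : ContinuousOn g (Ioi 0) := by
  intro u hu
  have hu : 0 < u := hu
  apply ContinuousAt.continuousWithinAt
  have h1 : ContinuousAt (fun v => (g (u / 2)).comp (S.T (v - u / 2))) u := by
    have h2 : ContinuousAt S.T (u - u / 2) :=
      (aux_normcont S hS).continuousAt (Ioi_mem_nhds (by linarith))
    have h3 : ContinuousAt (fun v => S.T (v - u / 2)) u :=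
      ContinuousAt.comp (f := fun v : ℝ => v - u / 2) h2 (by fun_prop)
    exact continuousAt_const.clm_comp h3
  refine h1.congr ?_
  filter_upwards [Ioi_mem_nhds (show u / 2 < u by linarith)] with v hv
  have hv : u / 2 < v := hv
  rw [← hg (u / 2) (by linarith) (v - u / 2) (by linarith), add_sub_cancel]

end helpers


set_option maxHeartbeats 1000000 in
/-- **Duhamel's formula.** Let `Z` generate a holomorphic semigroup and let
`(B(r))_{r ∈ [−ε,ε]}` be a family of closed operators with `B(0) = 0` such that
`B(r) e^{tZ}` (represented by the bounded operators `G r t`) is bounded, continuous in `r`,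
differentiable at `r = 0` with derivative `DB t`, and `‖r⁻¹ B(r) e^{tZ}‖ ≤ C t^{−1/2}` for
small `t`; assume the set of `f ∈ dom Z` with `B(r) e^{tZ} f ∈ dom Z` for all `t ≥ 0`,
`r ∈ [−ε,ε]` is dense. If `e^{t(Z+B(r))}` denotes the holomorphic semigroup generated by
`Z + B(r)`, then `(d/dr) e^{t(Z+B(r))}|_{r=0} = ∫₀ᵗ e^{sZ} (d/dr)(B(r)e^{(t−s)Z})|_{r=0} ds`
in operator norm. -/
theorem stmt7 {V : Type*} [NormedAddCommGroup V] [NormedSpace ℂ V] [CompleteSpace V]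
    (S : C0Semigroup V) (dom : Set V) (Z : V → V)
    (hgen : HasGenerator S dom Z)
    (hhol : IsHolomorphicSemigroup S)
    (ε : ℝ) (hε : 0 < ε)
    (domB : ℝ → Set V) (B : ℝ → V → V)
    (hBadd : ∀ r ∈ Set.Icc (-ε) ε, ∀ x ∈ domB r, ∀ y ∈ domB r,
      x + y ∈ domB r ∧ B r (x + y) = B r x + B r y)
    (hBsmul : ∀ r ∈ Set.Icc (-ε) ε, ∀ (c : ℂ), ∀ x ∈ domB r,
      c • x ∈ domB r ∧ B r (c • x) = c • B r x)
    (hBclosed : ∀ r ∈ Set.Icc (-ε) ε, IsClosed {p : V × V | p.1 ∈ domB r ∧ p.2 = B r p.1})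
    (hB0 : ∀ x : V, x ∈ domB 0 ∧ B 0 x = 0)
    (G : ℝ → ℝ → V →L[ℂ] V)
    (hG : ∀ r ∈ Set.Icc (-ε) ε, ∀ t : ℝ, 0 < t →
      ∀ x : V, S.T t x ∈ domB r ∧ G r t x = B r (S.T t x))
    (hGcont : ∀ t : ℝ, 0 < t → ContinuousOn (fun r => G r t) (Set.Icc (-ε) ε))
    (DB : ℝ → V →L[ℂ] V)
    (hDB : ∀ t : ℝ, 0 < t → HasDerivWithinAt (fun r => G r t) (DB t) (Set.Icc (-ε) ε) 0)
    (hest : ∃ C : ℝ, 0 < C ∧ ∀ r ∈ Set.Icc (-ε) ε, r ≠ 0 → ∀ t : ℝ, 0 < t → t < 1 →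
      ‖G r t‖ ≤ C * |r| / Real.sqrt t)
    (hdense : Dense {f : V | f ∈ dom ∧ ∀ t : ℝ, 0 ≤ t → ∀ r ∈ Set.Icc (-ε) ε,
      S.T t f ∈ domB r ∧ B r (S.T t f) ∈ dom})
    (SB : ℝ → C0Semigroup V)
    (hSB : ∀ r ∈ Set.Icc (-ε) ε, IsHolomorphicSemigroup (SB r) ∧
      HasGenerator (SB r) dom (fun x => Z x + B r x)) :
    ∀ t : ℝ, 0 ≤ t →
      HasDerivWithinAt (fun r => (SB r).T t)
        (∫ s in (0 : ℝ)..t, (S.T s).comp (DB (t - s))) (Set.Icc (-ε) ε) 0 := by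
  intro t ht
  obtain ⟨C, hC0, hC⟩ := hest
  obtain ⟨M, hM0, hM⟩ := aux_locbdd S t
  have h0mem : (0 : ℝ) ∈ Icc (-ε) ε := ⟨by linarith, hε.le⟩
  have hG0 : ∀ u > 0, G 0 u = 0 := by
    intro u hu; ext x
    rw [(hG 0 h0mem u hu x).2, (hB0 _).2]; rfl
  have hGcomp : ∀ r ∈ Icc (-ε) ε, ∀ δ > 0, ∀ v ≥ 0, G r (δ + v) = (G r δ).comp (S.T v) := by
    intro r hr δ hδ v hv
    ext x
    rw [(hG r hr (δ + v) (by linarith) x).2, S.map_add' δ v hδ.le hv]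
    exact ((hG r hr δ hδ (S.T v x)).2).symm
  have huniq : UniqueDiffWithinAt ℝ (Icc (-ε) ε) 0 :=
    uniqueDiffOn_Icc (by linarith) 0 h0mem
  have hDBcomp : ∀ δ > 0, ∀ v ≥ 0, DB (δ + v) = (DB δ).comp (S.T v) := by
    intro δ hδ v hv
    have h1 := hDB (δ + v) (by linarith)
    let L := (((ContinuousLinearMap.compL ℂ V V V).flip (S.T v)).restrictScalars ℝ)
    have h2 : HasDerivWithinAt (fun r => (G r δ).comp (S.T v)) ((DB δ).comp (S.T v))
        (Icc (-ε) ε) 0 := L.hasFDerivAt.comp_hasDerivWithinAt 0 (hDB δ hδ)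
    have h3 : HasDerivWithinAt (fun r => G r (δ + v)) ((DB δ).comp (S.T v))
        (Icc (-ε) ε) 0 := h2.congr (fun r hr => hGcomp r hr δ hδ v hv) (hGcomp 0 h0mem δ hδ v hv)
    exact huniq.eq_deriv _ h1 h3
  have hGc : ∀ r ∈ Icc (-ε) ε, ContinuousOn (G r) (Ioi 0) :=
    fun r hr => aux_cont_of_comp S hhol _ (hGcomp r hr)
  have hDBc : ContinuousOn DB (Ioi 0) := aux_cont_of_comp S hhol _ hDBcomp
  have hw : ∀ u : ℝ, 0 < u → u ^ (-(1/2) : ℝ) = (√u)⁻¹ := by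
    intro u hu
    rw [Real.sqrt_eq_rpow, Real.rpow_neg hu.le]
  set K : ℝ := C + C / √(1/2) * M * √t with hK
  have hK0 : 0 < K := by positivity
  have hGb : ∀ r ∈ Icc (-ε) ε, ∀ u ∈ Ioc 0 t, ‖G r u‖ ≤ (K * |r|) * u ^ (-(1/2) : ℝ) := by
    intro r hr u hu
    have hu0 : 0 < u := hu.1
    rw [hw u hu0]
    rcases eq_or_ne r 0 with rfl | hr0
    · rw [hG0 u hu0]; simp
    have hsu : 0 < √u := Real.sqrt_pos.2 hu0
    by_cases h1 : u < 1
    · refine (hC r hr hr0 u hu0 h1).trans ?_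
      rw [div_eq_mul_inv]
      gcongr
      rw [hK]
      have : 0 ≤ C / √(1/2) * M * √t := by positivity
      linarith
    · push Not at h1
      have h2 := hGcomp r hr (1/2) (by norm_num) (u - 1/2) (by linarith)
      rw [add_sub_cancel] at h2
      have h3 := hC r hr hr0 (1/2) (by norm_num) (by norm_num)
      have h4 := hM (u - 1/2) ⟨by linarith, by linarith [hu.2]⟩
      have h5 : √u ≤ √t := Real.sqrt_le_sqrt hu.2
      calc ‖G r u‖ ≤ ‖G r (1/2)‖ * ‖S.T (u - 1/2)‖ := by
            rw [h2]; exact ContinuousLinearMap.opNorm_comp_le _ _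
        _ ≤ (C * |r| / √(1/2)) * M := by gcongr
        _ = (C / √(1/2) * M * √u) * |r| * (√u)⁻¹ := by field_simp
        _ ≤ (C / √(1/2) * M * √t) * |r| * (√u)⁻¹ := by gcongr
        _ ≤ _ := by
          gcongr
          rw [hK]; linarith
  have hsl : ∀ u > 0, Tendsto (fun r : ℝ => r⁻¹ • G r u) (𝓝[Icc (-ε) ε \ {0}] 0) (𝓝 (DB u)) := by
    intro u hu
    have h1 := (hasDerivWithinAt_iff_tendsto_slope.1 (hDB u hu))
    refine h1.congr fun r => ?_
    rw [slope_def_module, hG0 u hu, sub_zero, sub_zero]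
  have hne : (𝓝[Icc (-ε) ε \ {0}] (0 : ℝ)).NeBot := by
    have := uniqueDiffWithinAt_iff_accPt.1 huniq
    rwa [accPt_principal_iff_nhdsWithin] at this
  have hqb : ∀ r ∈ Icc (-ε) ε \ {0}, ∀ u ∈ Ioc 0 t, ‖r⁻¹ • G r u‖ ≤ K * u ^ (-(1/2) : ℝ) := by
    intro r hr u hu
    have hr0 : 0 < |r| := abs_pos.2 hr.2
    rw [norm_smul, norm_inv, Real.norm_eq_abs]
    calc |r|⁻¹ * ‖G r u‖ ≤ |r|⁻¹ * ((K * |r|) * u ^ (-(1/2) : ℝ)) := by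
          gcongr; exact hGb r hr.1 u hu
      _ = _ := by field_simp
  have hDBb : ∀ u ∈ Ioc 0 t, ‖DB u‖ ≤ K * u ^ (-(1/2) : ℝ) := by
    intro u hu
    refine le_of_tendsto (hsl u hu.1).norm ?_
    filter_upwards [self_mem_nhdsWithin] with r hr using hqb r hr u hu
  have hgl : ∀ r ∈ Icc (-ε) ε, ∀ u > 0, ∀ x y, genLimit S (S.T u x) y →
      genLimit (SB r) (S.T u x) (y + G r u x) := by
    intro r hr u hu x y hy
    have hd : S.T u x ∈ dom := (hgen.mem_iff _).2 ⟨y, hy⟩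
    have h1 : Z (S.T u x) = y := tendsto_nhds_unique (hgen.tendsto _ hd) hy
    have h2 := (hSB r hr).2.tendsto _ hd
    rwa [h1, ← (hG r hr u hu x).2] at h2
  have hSB0 : (SB 0).T t = S.T t := by
    obtain ⟨m, -, hm⟩ := aux_locbdd (SB 0) t
    have h := aux_diff_bound (SB 0) S (hSB 0 h0mem).1 hhol (G 0) (hgl 0 h0mem) (hGc 0 h0mem)
      (K * |0|) t m (by positivity) (hGb 0 h0mem) hm t ⟨ht, le_rfl⟩
    simpa [sub_eq_zero] using h
  have hcq : ∀ r ∈ Icc (-ε) ε,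
      ContinuousOn (fun s => ‖r⁻¹ • G r (t - s) - DB (t - s)‖) (Ioo 0 t) := by
    intro r hr
    have c1 : ContinuousOn (fun s => G r (t - s)) (Ioo 0 t) := aux_cont_Ioo t (G r) (hGc r hr)
    have c2 : ContinuousOn (fun s => DB (t - s)) (Ioo 0 t) := aux_cont_Ioo t DB hDBc
    have c3 : ContinuousOn (fun s => r⁻¹ • G r (t - s)) (Ioo 0 t) := c1.const_smul r⁻¹
    exact (c3.sub c2).norm
  have hJ : Tendsto (fun r : ℝ => ∫ s in (0:ℝ)..t, ‖r⁻¹ • G r (t - s) - DB (t - s)‖)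
      (𝓝[Icc (-ε) ε \ {0}] 0) (𝓝 0) := by
    have hae : ∀ᵐ s : ℝ, s ≠ t := by simp [ae_iff]
    have h := intervalIntegral.tendsto_integral_filter_of_dominated_convergence
      (μ := volume) (a := 0) (b := t) (l := 𝓝[Icc (-ε) ε \ {0}] (0:ℝ))
      (F := fun r s => ‖r⁻¹ • G r (t - s) - DB (t - s)‖) (f := fun _ => (0:ℝ))
      (fun s => 2 * K * (t - s) ^ (-(1/2) : ℝ)) ?_ ?_ ((aux_w_int t).const_mul _) ?_
    · simpa using h
    · filter_upwards [self_mem_nhdsWithin] with r hr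
      rw [uIoc_of_le ht, ← restrict_Ioo_eq_restrict_Ioc]
      refine ContinuousOn.aestronglyMeasurable ?_ measurableSet_Ioo
      exact hcq r hr.1
    · filter_upwards [self_mem_nhdsWithin] with r hr
      filter_upwards [hae] with s hst hs
      rw [uIoc_of_le ht] at hs
      have hmem : t - s ∈ Ioc 0 t :=
        ⟨by linarith [lt_of_le_of_ne hs.2 hst], by linarith [hs.1]⟩
      have h1 := hqb r hr _ hmem
      have h2 := hDBb _ hmem
      rw [norm_norm]
      have h3 := norm_sub_le (r⁻¹ • G r (t - s)) (DB (t - s))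
      linarith
    · filter_upwards [hae] with s hst hs
      rw [uIoc_of_le ht] at hs
      have h1 := (hsl (t - s) (by linarith [lt_of_le_of_ne hs.2 hst])).sub_const (DB (t - s))
      simpa using h1.norm
  rw [hasDerivWithinAt_iff_tendsto_slope, tendsto_iff_norm_sub_tendsto_zero]
  have hr0 : Tendsto (fun r : ℝ => |r|) (𝓝[Icc (-ε) ε \ {0}] (0:ℝ)) (𝓝 0) := by
    have : Tendsto (fun r : ℝ => |r|) (𝓝 0) (𝓝 |0|) := continuous_abs.tendsto 0
    rw [abs_zero] at this
    exact this.mono_left nhdsWithin_le_nhds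
  have hlim : Tendsto (fun r : ℝ => (2 * M * K * (2 * √t)) * (K * (2 * √t)) * |r|
      + M * ∫ s in (0:ℝ)..t, ‖r⁻¹ • G r (t - s) - DB (t - s)‖)
      (𝓝[Icc (-ε) ε \ {0}] 0) (𝓝 0) := by
    simpa using (hr0.const_mul ((2 * M * K * (2 * √t)) * (K * (2 * √t)))).add (hJ.const_mul M)
  refine squeeze_zero' (Eventually.of_forall fun r => norm_nonneg _) ?_ hlim
  have hsm : ∀ᶠ r : ℝ in 𝓝[Icc (-ε) ε \ {0}] (0:ℝ), K * |r| * (2 * √t) < 1/2 := by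
    have h : Tendsto (fun r : ℝ => K * |r| * (2 * √t)) (𝓝[Icc (-ε) ε \ {0}] (0:ℝ)) (𝓝 0) := by
      simpa using (hr0.const_mul K).mul_const (2 * √t)
    exact h.eventually_lt_const (by norm_num)
  filter_upwards [self_mem_nhdsWithin, hsm] with r hr hrs
  have hrI := hr.1
  have hrne : r ≠ 0 := hr.2
  have hKr : 0 ≤ K * |r| := by positivity
  have hun := aux_unif (SB r) S (hSB r hrI).1 hhol (G r) (hgl r hrI) (hGc r hrI) (K * |r|) t M ht
    hKr (hGb r hrI) hM hrs.le
  have hdiff := aux_diff_bound (SB r) S (hSB r hrI).1 hhol (G r) (hgl r hrI) (hGc r hrI)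
    (K * |r|) t (2 * M) hKr (hGb r hrI) hun
  have hduh := aux_duhamel (SB r) S (hSB r hrI).1 hhol (G r) (hgl r hrI) (hGc r hrI) (K * |r|) t ht
    (hGb r hrI)
  have hi1 := aux_duhamel_int (SB r) (hSB r hrI).1 (G r) (hGc r hrI) (K * |r|) t (2 * M) ht hun
    (hGb r hrI)
  have hi2 := aux_duhamel_int S hhol DB hDBc K t M ht hM hDBb
  have hi3 : IntervalIntegrable (fun s => ‖r⁻¹ • G r (t - s) - DB (t - s)‖) volume 0 t := by
    refine aux_integrable t ht _ ?_ (2 * K) ?_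
    · exact hcq r hrI
    · intro s hs
      have hmem : t - s ∈ Ioc 0 t := ⟨by linarith [hs.2], by linarith [hs.1]⟩
      have h1 := hqb r hr _ hmem
      have h2 := hDBb _ hmem
      rw [norm_norm]
      have h3 := norm_sub_le (r⁻¹ • G r (t - s)) (DB (t - s))
      linarith
  have hi1' : IntervalIntegrable (fun s => r⁻¹ • ((SB r).T s).comp (G r (t - s))) volume 0 t :=
    hi1.smul r⁻¹
  rw [slope_def_module, hSB0, hduh, sub_zero, ← intervalIntegral.integral_smul,
    ← intervalIntegral.integral_sub hi1' hi2]
  have hbound := intervalIntegral.norm_integral_le_of_norm_le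
    (f := fun s => r⁻¹ • ((SB r).T s).comp (G r (t - s)) - (S.T s).comp (DB (t - s)))
    (μ := volume) ht (g := fun s => (2 * M * (K * |r|) * (2 * √t)) * K * (t - s) ^ (-(1/2) : ℝ)
      + M * ‖r⁻¹ • G r (t - s) - DB (t - s)‖) ?_
    (((aux_w_int t).const_mul _).add (hi3.const_mul M))
  · refine hbound.trans (le_of_eq ?_)
    rw [intervalIntegral.integral_add ((aux_w_int t).const_mul _) (hi3.const_mul M),
      intervalIntegral.integral_const_mul, intervalIntegral.integral_const_mul, aux_w_val t]
    ring
  · have hae : ∀ᵐ s : ℝ, s ≠ t := by simp [ae_iff]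
    filter_upwards [hae] with s hst hs
    have hmem : t - s ∈ Ioc 0 t :=
      ⟨by linarith [lt_of_le_of_ne hs.2 hst], by linarith [hs.1]⟩
    have hsI : s ∈ Icc 0 t := ⟨hs.1.le, hs.2⟩
    have e : r⁻¹ • ((SB r).T s).comp (G r (t - s)) - (S.T s).comp (DB (t - s))
        = ((SB r).T s - S.T s).comp (r⁻¹ • G r (t - s))
          + (S.T s).comp (r⁻¹ • G r (t - s) - DB (t - s)) := by
      ext x
      have hlin : ∀ (A : V →L[ℂ] V) (y : V), A (r⁻¹ • y) = r⁻¹ • A y := fun A y =>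
        (A.restrictScalars ℝ).map_smul r⁻¹ y
      simp [hlin, smul_sub]
    rw [e]
    refine (norm_add_le _ _).trans (add_le_add ?_ ?_)
    · refine (ContinuousLinearMap.opNorm_comp_le _ _).trans ?_
      have h1 := hdiff s hsI
      rw [mul_assoc _ K]
      exact mul_le_mul h1 (hqb r hr _ hmem) (norm_nonneg _) ((norm_nonneg _).trans h1)
    · refine (ContinuousLinearMap.opNorm_comp_le _ _).trans ?_
      gcongr
      exact hM s hsI
end
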